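/- arXiv:2501.07147 — 5 statements merged into one kernel-verified Lean document; each statement's English description precedes it below -/
import Mathlib

section
/- Let (X,d,μ) be a metric measure space, where μ is a Borel measure that is positive and finite on open balls, satisfying the relative lower volume decay of order Q: there exist constants C_Q > 0 and Q > 1 such that (r/R)^Q ≤ C_Q · μ(B(y,r))/μ(B(z,R)) whenever 0 < r ≤ R and y ∈ B(z,R). Let λ ≥ 1, let G ⊆ X be a Borel set, and let x, x' ∈ X and r > 0 satisfy d(x,x') ≤ 8λr and μ(B(x', 9λr) ∩ G) ≤ μ(B(x', 9λr)) / ((20λ)^Q · C_Q). Then μ(B(x,r) ∩ G) ≤ μ(B(x,r))/2. -/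
open MeasureTheory Metric

/-- Key density estimate (Lemma 3.1 of the paper): in a metric measure
space whose measure is positive and finite on balls and satisfies a relative lower volume
decay of order `Q`, if `G` has small relative measure in the ball `B(x', 9λr)` and
`d(x,x') ≤ 8λr`, then `G` covers at most half of `B(x,r)`. -/
theorem ball_inter_le_half_of_density
    {X : Type*} [MetricSpace X] [MeasurableSpace X] [BorelSpace X]
    (μ : Measure X)
    (hball : ∀ (x : X) (r : ℝ), 0 < r → 0 < μ (ball x r) ∧ μ (ball x r) < ⊤)
    (C_Q Q : ℝ) (hCQ : 0 < C_Q) (hQ : 1 < Q)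
    (hdecay : ∀ (z y : X) (r R : ℝ), 0 < r → r ≤ R → y ∈ ball z R →
      ENNReal.ofReal ((r / R) ^ Q) * μ (ball z R) ≤ ENNReal.ofReal C_Q * μ (ball y r))
    (lam : ℝ) (hlam : 1 ≤ lam)
    (G : Set X) (hG : MeasurableSet G)
    (x x' : X) (r : ℝ) (hr : 0 < r)
    (hd : dist x x' ≤ 8 * lam * r)
    (hsmall : μ (ball x' (9 * lam * r) ∩ G) ≤
      μ (ball x' (9 * lam * r)) / ENNReal.ofReal ((20 * lam) ^ Q * C_Q)) :
    μ (ball x r ∩ G) ≤ μ (ball x r) / 2 := by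
  have hlam0 : 0 < lam := by linarith
  have hlr : r ≤ lam * r := by nlinarith
  have hR : 0 < 9 * lam * r := by positivity
  have hsub : ball x r ⊆ ball x' (9 * lam * r) := by
    apply ball_subset_ball'
    linarith
  have hx : x ∈ ball x' (9 * lam * r) := hsub (mem_ball_self hr)
  have h1 := hdecay x' x r (9 * lam * r) hr (by nlinarith) hx
  have h2 : μ (ball x r ∩ G) ≤ μ (ball x' (9 * lam * r) ∩ G) :=
    measure_mono (Set.inter_subset_inter_left _ hsub)
  refine h2.trans (hsmall.trans ?_)
  have hM := (hball x' (9 * lam * r) hR).2.ne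
  have hm := (hball x r hr).2.ne
  generalize μ (ball x' (9 * lam * r)) = M at *
  generalize μ (ball x r) = m at *
  lift M to NNReal using hM
  lift m to NNReal using hm
  have hK : 0 < (20 * lam) ^ Q * C_Q := by positivity
  have ht : 0 < (r / (9 * lam * r)) ^ Q := by positivity
  have e : (2 : ℝ) ≤ (r / (9 * lam * r)) ^ Q * (20 * lam) ^ Q := by
    rw [← Real.mul_rpow (by positivity) (by positivity)]
    have : r / (9 * lam * r) * (20 * lam) = 20 / 9 := by field_simp
    rw [this]
    have := Real.rpow_le_rpow_of_exponent_le (x := 20 / 9) (by norm_num) hQ.le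
    rw [Real.rpow_one] at this
    linarith
  rw [← ENNReal.ofReal_coe_nnreal (p := M), ← ENNReal.ofReal_coe_nnreal (p := m)] at *
  rw [← ENNReal.ofReal_mul ht.le, ← ENNReal.ofReal_mul hCQ.le,
    ENNReal.ofReal_le_ofReal_iff (by positivity)] at h1
  rw [← ENNReal.ofReal_div_of_pos hK, show (2 : ENNReal) = ENNReal.ofReal 2 by simp,
    ← ENNReal.ofReal_div_of_pos two_pos]
  apply ENNReal.ofReal_le_ofReal
  rw [div_le_div_iff₀ hK two_pos]
  have hP : 0 < (20 * lam) ^ Q := by positivity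
  have h3 := mul_le_mul_of_nonneg_left h1 hP.le
  have h4 := mul_le_mul_of_nonneg_right e M.coe_nonneg
  linarith
end

section
/- Let (X,d,μ) be a metric measure space, where μ is a Borel measure that is positive and finite on open balls. Let f, g : X → ℝ be μ-measurable functions and let x ∈ X. Suppose that for every δ > 0, lim_{r→0} μ({y ∈ B(x,r) : |f(y) − g(y)| > δ}) / μ(B(x,r)) = 0. Then f^∨(x) = g^∨(x) and f^∧(x) = g^∧(x), where the equalities are understood in the extended reals. -/
open MeasureTheory Metric Filter Topology

/-- The upper approximate limit `f^∨(x)` of a function `f` at `x`, valued in the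
extended reals (with the convention `inf ∅ = +∞`). -/
noncomputable def upperApproxLimit {X : Type*} [MetricSpace X] [MeasurableSpace X]
    (μ : Measure X) (f : X → ℝ) (x : X) : EReal :=
  sInf ((fun t : ℝ => (t : EReal)) ''
    {t : ℝ | Tendsto (fun r : ℝ => μ {y | y ∈ ball x r ∧ t < f y} / μ (ball x r))
      (𝓝[>] (0 : ℝ)) (𝓝 0)})

/-- The lower approximate limit `f^∧(x)` of a function `f` at `x`, valued in the
extended reals (with the convention `sup ∅ = -∞`). -/
noncomputable def lowerApproxLimit {X : Type*} [MetricSpace X] [MeasurableSpace X]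
    (μ : Measure X) (f : X → ℝ) (x : X) : EReal :=
  sSup ((fun t : ℝ => (t : EReal)) ''
    {t : ℝ | Tendsto (fun r : ℝ => μ {y | y ∈ ball x r ∧ f y < t} / μ (ball x r))
      (𝓝[>] (0 : ℝ)) (𝓝 0)})

theorem tendsto_ratio_aux {X : Type*} [MetricSpace X] [MeasurableSpace X]
    (μ : Measure X) (x : X) (p q s : X → Prop) (hpq : ∀ y, p y → q y ∨ s y)
    (hq : Tendsto (fun r : ℝ => μ {y | y ∈ ball x r ∧ q y} / μ (ball x r)) (𝓝[>] (0 : ℝ)) (𝓝 0))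
    (hs : Tendsto (fun r : ℝ => μ {y | y ∈ ball x r ∧ s y} / μ (ball x r)) (𝓝[>] (0 : ℝ)) (𝓝 0)) :
    Tendsto (fun r : ℝ => μ {y | y ∈ ball x r ∧ p y} / μ (ball x r)) (𝓝[>] (0 : ℝ)) (𝓝 0) := by
  have h := hq.add hs
  rw [add_zero] at h
  refine tendsto_of_tendsto_of_tendsto_of_le_of_le tendsto_const_nhds h (fun _ => zero_le) ?_
  intro r
  show _ ≤ _ / _ + _ / _
  rw [← ENNReal.add_div]
  refine ENNReal.div_le_div_right (le_trans (measure_mono ?_) (measure_union_le _ _)) _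
  rintro y ⟨hy, hp⟩
  rcases hpq y hp with h | h
  · exact Or.inl ⟨hy, h⟩
  · exact Or.inr ⟨hy, h⟩

theorem upper_le_aux {X : Type*} [MetricSpace X] [MeasurableSpace X]
    (μ : Measure X) (f g : X → ℝ) (x : X)
    (h : ∀ δ : ℝ, 0 < δ →
      Tendsto (fun r : ℝ => μ {y | y ∈ ball x r ∧ δ < |f y - g y|} / μ (ball x r))
        (𝓝[>] (0 : ℝ)) (𝓝 0)) :
    upperApproxLimit μ g x ≤ upperApproxLimit μ f x := by
  refine le_sInf ?_
  rintro _ ⟨t, ht, rfl⟩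
  refine EReal.le_of_forall_lt_iff_le.1 fun z hz => ?_
  have hz' : t < z := EReal.coe_lt_coe_iff.1 hz
  refine sInf_le ⟨z, ?_, rfl⟩
  refine tendsto_ratio_aux μ x _ _ _ ?_ ht (h (z - t) (sub_pos.2 hz'))
  intro y hy
  by_contra! hc
  have := neg_abs_le (f y - g y)
  linarith [hc.1, hc.2]

theorem lower_le_aux {X : Type*} [MetricSpace X] [MeasurableSpace X]
    (μ : Measure X) (f g : X → ℝ) (x : X)
    (h : ∀ δ : ℝ, 0 < δ →
      Tendsto (fun r : ℝ => μ {y | y ∈ ball x r ∧ δ < |f y - g y|} / μ (ball x r))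
        (𝓝[>] (0 : ℝ)) (𝓝 0)) :
    lowerApproxLimit μ f x ≤ lowerApproxLimit μ g x := by
  refine sSup_le ?_
  rintro _ ⟨t, ht, rfl⟩
  refine EReal.ge_of_forall_gt_iff_ge.1 fun z hz => ?_
  have hz' : z < t := EReal.coe_lt_coe_iff.1 hz
  refine le_sSup ⟨z, ?_, rfl⟩
  refine tendsto_ratio_aux μ x _ _ _ ?_ ht (h (t - z) (sub_pos.2 hz'))
  intro y hy
  by_contra! hc
  have := le_abs_self (f y - g y)
  linarith [hc.1, hc.2]

/-- If `f` and `g` are approximately equal at `x`, in the sense that for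
every `δ > 0` the relative measure of `{y ∈ B(x,r) : |f y - g y| > δ}` in `B(x,r)` tends
to `0` as `r → 0⁺`, then the upper and lower approximate limits of `f` and `g` at `x`
coincide. -/
theorem approxLimit_eq_of_approx_eq
    {X : Type*} [MetricSpace X] [MeasurableSpace X] [BorelSpace X]
    (μ : Measure X)
    (hball : ∀ (x : X) (r : ℝ), 0 < r → 0 < μ (ball x r) ∧ μ (ball x r) < ⊤)
    (f g : X → ℝ) (hf : Measurable f) (hg : Measurable g) (x : X)
    (h : ∀ δ : ℝ, 0 < δ →
      Tendsto (fun r : ℝ => μ {y | y ∈ ball x r ∧ δ < |f y - g y|} / μ (ball x r))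
        (𝓝[>] (0 : ℝ)) (𝓝 0)) :
    upperApproxLimit μ f x = upperApproxLimit μ g x ∧
    lowerApproxLimit μ f x = lowerApproxLimit μ g x := by
  have h' : ∀ δ : ℝ, 0 < δ →
      Tendsto (fun r : ℝ => μ {y | y ∈ ball x r ∧ δ < |g y - f y|} / μ (ball x r))
        (𝓝[>] (0 : ℝ)) (𝓝 0) := by
    intro δ hδ
    simpa only [abs_sub_comm] using h δ hδ
  exact ⟨le_antisymm (upper_le_aux μ g f x h') (upper_le_aux μ f g x h),
    le_antisymm (lower_le_aux μ f g x h) (lower_le_aux μ g f x h')⟩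
end

section
/- Let O=(0,0), A=(0,1), C=(1,1) in ℝ², let X := [O,A] ∪ [O,C] be the union of the closed line segments from O to A and from O to C, let μ := H¹⌊X be the 1-dimensional Hausdorff measure restricted to X, and let f := χ_{[O,A]}. Then for every x ∈ [O,A] with x ≠ O, the non-centered maximal function satisfies Mf(x) = 1. -/
open MeasureTheory Metric Filter Topology
open scoped ENNReal

noncomputable section

/-- The point `O = (0,0)` in the plane. -/
def ptO : EuclideanSpace ℝ (Fin 2) := !₂[0, 0]
/-- The point `A = (0,1)` in the plane. -/
def ptA : EuclideanSpace ℝ (Fin 2) := !₂[0, 1]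
/-- The point `C = (1,1)` in the plane. -/
def ptC : EuclideanSpace ℝ (Fin 2) := !₂[1, 1]

/-- The space `X = [O,A] ∪ [O,C]`, the union of the two closed segments. -/
def Xsp : Set (EuclideanSpace ℝ (Fin 2)) := segment ℝ ptO ptA ∪ segment ℝ ptO ptC

/-- The measure `μ = H¹⌊X`, the `1`-dimensional Hausdorff measure restricted to `X`. -/
def μX : Measure (EuclideanSpace ℝ (Fin 2)) := (μH[1]).restrict Xsp

/-- The function `f = χ_{[O,A]}`. -/
def fX : EuclideanSpace ℝ (Fin 2) → ℝ≥0∞ := (segment ℝ ptO ptA).indicator 1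

/-- The non-centered maximal function of `f` on the metric measure space `(X, d₂, μ)`:
`Mf(x) = sup { (1/μ(B(z,r))) ∫_{B(z,r)} f dμ : z ∈ X, r > 0, x ∈ B(z,r) }`. -/
def Mmax (x : EuclideanSpace ℝ (Fin 2)) : ℝ≥0∞ :=
  ⨆ (z ∈ Xsp) (r : ℝ) (_ : 0 < r) (_ : x ∈ ball z r),
    (∫⁻ y in ball z r, fX y ∂μX) / μX (ball z r)

/-- For every `x ∈ [O,A]` with `x ≠ O`, the non-centered maximal
function of `f = χ_{[O,A]}` on `(X, d₂, H¹⌊X)` satisfies `Mf(x) = 1`. -/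
theorem Mmax_eq_one_on_segment (x : EuclideanSpace ℝ (Fin 2))
    (hx : x ∈ segment ℝ ptO ptA) (hxO : x ≠ ptO) :
    Mmax x = 1 := by
  have hX : MeasurableSet (segment ℝ ptO ptA) := by
    rw [← convexHull_pair]
    exact ((Set.toFinite _).isCompact_convexHull ℝ).isClosed.measurableSet
  apply le_antisymm
  · unfold Mmax
    refine iSup₂_le fun z _ => iSup₂_le fun r _ => iSup_le fun _ => ?_
    refine ENNReal.div_le_of_le_mul ?_
    rw [one_mul]
    calc (∫⁻ y in ball z r, fX y ∂μX) ≤ ∫⁻ y in ball z r, 1 ∂μX := by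
          apply lintegral_mono
          intro y
          exact Set.indicator_le_self' (fun _ _ => zero_le) y
      _ = μX (ball z r) := by simp
  · obtain ⟨t, ht, rfl⟩ : ∃ t ∈ Set.Icc (0:ℝ) 1, !₂[0, t] = x := by
      rw [segment_eq_image] at hx
      obtain ⟨t, ht, rfl⟩ := hx
      refine ⟨t, ht, ?_⟩
      ext i; fin_cases i <;> simp [ptO, ptA]
    have ht0 : 0 < t := by
      rcases ht.1.lt_or_eq with h | h
      · exact h
      · exact absurd (by rw [← h]; rfl) hxO
    have hsub : ball (!₂[0, t] : EuclideanSpace ℝ (Fin 2)) (t/2) ∩ Xsp ⊆ segment ℝ ptO ptA := by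
      rintro y ⟨hy, h | h⟩
      · exact h
      · exfalso
        rw [segment_eq_image] at h
        obtain ⟨s, hs, rfl⟩ := h
        rw [mem_ball, EuclideanSpace.dist_eq, Real.sqrt_lt' (by linarith)] at hy
        simp [ptO, ptC, Fin.sum_univ_two, Real.dist_eq, sq_abs] at hy
        nlinarith [sq_nonneg (2 * s - t)]
    have hball : MeasurableSet (ball (!₂[0, t] : EuclideanSpace ℝ (Fin 2)) (t/2)) :=
      isOpen_ball.measurableSet
    have hμ : μX (ball !₂[0, t] (t/2)) = μH[1] (ball (!₂[0, t] : EuclideanSpace ℝ (Fin 2)) (t/2) ∩ Xsp) := by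
      unfold μX
      rw [Measure.restrict_apply hball]
    have hint : (∫⁻ y in ball !₂[0, t] (t/2), fX y ∂μX) = μX (ball !₂[0, t] (t/2)) := by
      unfold fX
      rw [lintegral_indicator_one hX, Measure.restrict_apply hX, hμ]
      unfold μX
      rw [Measure.restrict_apply (hX.inter hball)]
      congr 1
      ext y
      constructor
      · rintro ⟨⟨_, h2⟩, h3⟩
        exact ⟨h2, h3⟩
      · intro h
        exact ⟨⟨hsub h, h.1⟩, h.2⟩
    have hfin : μX (ball !₂[0, t] (t/2)) ≠ ⊤ := by
      rw [hμ]
      refine ne_top_of_le_ne_top ?_ (measure_mono hsub)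
      rw [hausdorffMeasure_segment]
      exact edist_ne_top _ _
    have hpos : μX (ball !₂[0, t] (t/2)) ≠ 0 := by
      rw [hμ]
      have hs : segment ℝ (!₂[0, t] : EuclideanSpace ℝ (Fin 2)) !₂[0, 3 * t / 4] ⊆
          ball (!₂[0, t] : EuclideanSpace ℝ (Fin 2)) (t/2) ∩ Xsp := by
        apply Set.subset_inter
        · apply (convex_ball _ _).segment_subset
          · exact mem_ball_self (by linarith)
          · rw [mem_ball, EuclideanSpace.dist_eq, Real.sqrt_lt' (by linarith)]
            simp [Fin.sum_univ_two, Real.dist_eq, sq_abs]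
            nlinarith
        · refine subset_trans ?_ Set.subset_union_left
          apply (convex_segment _ _).segment_subset hx
          rw [segment_eq_image]
          refine ⟨3 * t / 4, ⟨by linarith, by linarith [ht.2]⟩, ?_⟩
          ext i; fin_cases i <;> simp [ptO, ptA]
      intro h0
      have h1 := measure_mono_null hs h0
      rw [hausdorffMeasure_segment, edist_eq_zero] at h1
      have h2 := congrArg (fun v : EuclideanSpace ℝ (Fin 2) => v 1) h1
      simp at h2
      linarith
    unfold Mmax
    refine le_trans ?_ (le_iSup₂_of_le !₂[0, t] (Or.inl hx) (le_iSup₂_of_le (t/2) (by linarith)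
      (le_iSup_of_le (mem_ball_self (by linarith)) le_rfl)))
    rw [hint, ENNReal.div_self hpos hfin]

end
end

section
/- Let O=(0,0), A=(0,1), C=(1,1) in ℝ², and let H¹ denote 1-dimensional Hausdorff measure on ℝ². Then for every z on the closed segment [O,C] and every ρ > |z| (so that O ∈ B(z,ρ)), one has H¹(B(z,ρ) ∩ [O,A]) ≤ H¹(B(z,ρ) ∩ [O,C]). Consequently, with μ := H¹⌊([O,A] ∪ [O,C]) and f := χ_{[O,A]}, one has (1/μ(B(z,ρ))) ∫_{B(z,ρ)} f dμ ≤ 1/2. -/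
open MeasureTheory Metric Filter Topology
open scoped ENNReal

noncomputable section

/-- The map `p ↦ (0, (p₀ + p₁)/√2)`. -/
def gmap (p : EuclideanSpace ℝ (Fin 2)) : EuclideanSpace ℝ (Fin 2) :=
  !₂[0, (p 0 + p 1) / √2]

lemma gmap_lip : LipschitzWith 1 gmap := by
  apply LipschitzWith.of_dist_le_mul
  intro x y
  have h2 : (√2 : ℝ) ^ 2 = 2 := Real.sq_sqrt (by norm_num)
  simp only [EuclideanSpace.dist_eq, Fin.sum_univ_two, gmap, Real.dist_eq, sq_abs, NNReal.coe_one,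
    one_mul]
  apply Real.sqrt_le_sqrt
  simp only [Matrix.cons_val_zero, Matrix.cons_val_one]
  rw [← sub_div, div_pow, h2]
  nlinarith [sq_nonneg ((x 0 - y 0) - (x 1 - y 1))]

lemma mem_OA {p : EuclideanSpace ℝ (Fin 2)} (h : p ∈ segment ℝ ptO ptA) :
    p 0 = 0 ∧ 0 ≤ p 1 ∧ p 1 ≤ 1 := by
  obtain ⟨a, b, ha, hb, hab, rfl⟩ := h
  simp [ptO, ptA]
  constructor <;> linarith

lemma mem_OC {p : EuclideanSpace ℝ (Fin 2)} (h : p ∈ segment ℝ ptO ptC) :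
    p 0 = p 1 ∧ 0 ≤ p 1 ∧ p 1 ≤ 1 := by
  obtain ⟨a, b, ha, hb, hab, rfl⟩ := h
  simp [ptO, ptC]
  constructor <;> linarith

lemma sub_image (z : EuclideanSpace ℝ (Fin 2)) (hz : z ∈ segment ℝ ptO ptC) (ρ : ℝ) :
    ball z ρ ∩ segment ℝ ptO ptA ⊆ gmap '' (ball z ρ ∩ segment ℝ ptO ptC) := by
  rintro p ⟨hp, hpA⟩
  obtain ⟨h0, h1, h2⟩ := mem_OA hpA
  obtain ⟨z0, z1, z2⟩ := mem_OC hz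
  have hs : (√2 : ℝ) ^ 2 = 2 := Real.sq_sqrt (by norm_num)
  have hs1 : (1 : ℝ) ≤ √2 := by rw [Real.one_le_sqrt]; norm_num
  have hs0 : (0 : ℝ) < √2 := by linarith
  have hd1 : p 1 / √2 * √2 = p 1 := by field_simp
  have hd0 : 0 ≤ p 1 / √2 := by positivity
  generalize hd : p 1 / √2 = d at hd1 hd0
  refine ⟨!₂[d, d], ⟨?_, 1 - d, d, ?_, hd0, by ring, ?_⟩, ?_⟩
  · rw [mem_ball] at hp ⊢
    refine lt_of_le_of_lt ?_ hp
    simp only [EuclideanSpace.dist_eq, Fin.sum_univ_two, Real.dist_eq, sq_abs]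
    apply Real.sqrt_le_sqrt
    simp only [Matrix.cons_val_zero, Matrix.cons_val_one]
    rw [h0, z0, ← hd1]
    have := mul_nonneg (mul_nonneg hd0 z1) (sub_nonneg.2 hs1)
    have h3 : d * z 1 * √2 ≤ 2 * (d * z 1) := by
      have : √2 ≤ 2 := by nlinarith
      nlinarith [mul_nonneg hd0 z1]
    have h4 : (d * √2) ^ 2 = 2 * d ^ 2 := by rw [mul_pow, hs]; ring
    nlinarith
  · rw [← hd, sub_nonneg, div_le_one hs0]; linarith
  · ext i
    fin_cases i <;> simp [ptO, ptC]
  · ext i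
    fin_cases i
    · simp [gmap, h0]
    · simp [gmap]
      rw [div_eq_iff hs0.ne', ← hd1]
      linear_combination (-d) * hs

lemma meas_seg (x y : EuclideanSpace ℝ (Fin 2)) : MeasurableSet (segment ℝ x y) := by
  rw [segment_eq_image_lineMap]
  exact (isCompact_Icc.image (by fun_prop)).measurableSet

/-- For every `z ∈ [O,C]` and every `ρ > |z|` (so that `O ∈ B(z,ρ)`),
one has `H¹(B(z,ρ) ∩ [O,A]) ≤ H¹(B(z,ρ) ∩ [O,C])`, and consequently the average of
`f = χ_{[O,A]}` over `B(z,ρ)` with respect to `μ = H¹⌊X` is at most `1/2`. -/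
theorem average_le_half_of_center_on_OC (z : EuclideanSpace ℝ (Fin 2))
    (hz : z ∈ segment ℝ ptO ptC) (ρ : ℝ) (hρ : dist z ptO < ρ) :
    μH[1] (ball z ρ ∩ segment ℝ ptO ptA) ≤ μH[1] (ball z ρ ∩ segment ℝ ptO ptC) ∧
    (∫⁻ y in ball z ρ, fX y ∂μX) / μX (ball z ρ) ≤ 1 / 2 := by
  have key : μH[1] (ball z ρ ∩ segment ℝ ptO ptA) ≤ μH[1] (ball z ρ ∩ segment ℝ ptO ptC) := by
    refine (measure_mono (sub_image z hz ρ)).trans ?_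
    simpa using gmap_lip.hausdorffMeasure_image_le (d := 1) zero_le_one
      (ball z ρ ∩ segment ℝ ptO ptC)
  refine ⟨key, ?_⟩
  have hI : (∫⁻ y in ball z ρ, fX y ∂μX) = μH[1] (ball z ρ ∩ segment ℝ ptO ptA) := by
    rw [fX, lintegral_indicator_one (meas_seg _ _), Measure.restrict_apply (meas_seg _ _), μX,
      Measure.restrict_apply ((meas_seg _ _).inter measurableSet_ball)]
    congr 1
    ext p
    simp only [Xsp, Set.mem_inter_iff, Set.mem_union]
    tauto
  have hM : μX (ball z ρ) =
      μH[1] (ball z ρ ∩ segment ℝ ptO ptA) + μH[1] (ball z ρ ∩ segment ℝ ptO ptC) := by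
    rw [μX, Measure.restrict_apply measurableSet_ball, Xsp, Set.inter_union_distrib_left]
    apply measure_union₀ (measurableSet_ball.inter (meas_seg _ _)).nullMeasurableSet
    have : NullSingletonClass (μH[1] : Measure (EuclideanSpace ℝ (Fin 2))) :=
      Measure.nullSingletonClass_hausdorff _ one_pos
    refine measure_mono_null (t := {ptO}) ?_ (measure_singleton _)
    rintro p ⟨⟨-, hA⟩, -, hC⟩
    obtain ⟨h0, -, -⟩ := mem_OA hA
    obtain ⟨h1, -, -⟩ := mem_OC hC
    rw [Set.mem_singleton_iff]
    ext i
    fin_cases i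
    · simp [ptO, h0]
    · simp [ptO, ← h1, h0]
  rw [hI, hM]
  apply ENNReal.div_le_of_le_mul
  calc μH[1] (ball z ρ ∩ segment ℝ ptO ptA)
      = 1 / 2 * (μH[1] (ball z ρ ∩ segment ℝ ptO ptA)
          + μH[1] (ball z ρ ∩ segment ℝ ptO ptA)) := by
        rw [← two_mul, ← mul_assoc, one_div, ENNReal.inv_mul_cancel (by simp) (by simp), one_mul]
    _ ≤ _ := by gcongr

end
end

section
/- Let O=(0,0), A=(0,1), C=(1,1) in ℝ², X := [O,A] ∪ [O,C], μ := H¹⌊X, and f := χ_{[O,A]}. Then for every z on the closed segment [O,A] and every ρ > |z| (so that O ∈ B(z,ρ)), one has (1/μ(B(z,ρ))) ∫_{B(z,ρ)} f dμ ≤ 2/(2+√2). -/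
open MeasureTheory Metric Filter Topology
open scoped ENNReal

noncomputable section

lemma lineA (s : ℝ) : AffineMap.lineMap ptO ptA s = (!₂[0, s] : EuclideanSpace ℝ (Fin 2)) := by
  ext i; fin_cases i <;> simp [AffineMap.lineMap_apply, ptO, ptA]

lemma lineC (s : ℝ) : AffineMap.lineMap ptO ptC s = (!₂[s, s] : EuclideanSpace ℝ (Fin 2)) := by
  ext i; fin_cases i <;> simp [AffineMap.lineMap_apply, ptO, ptC]

lemma mem_ball_iff_sq (a b t ρ : ℝ) (hρ : 0 < ρ) :
    (!₂[a, b] : EuclideanSpace ℝ (Fin 2)) ∈ ball (!₂[0, t] : EuclideanSpace ℝ (Fin 2)) ρ ↔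
      a ^ 2 + (b - t) ^ 2 < ρ ^ 2 := by
  rw [mem_ball, EuclideanSpace.dist_eq, Real.sqrt_lt' hρ]
  simp [Fin.sum_univ_two, Real.dist_eq, sq_abs]

/-- For every `z ∈ [O,A]` and every `ρ > |z|` (so that `O ∈ B(z,ρ)`),
the average of `f = χ_{[O,A]}` over `B(z,ρ)` with respect to `μ = H¹⌊X` is at most
`2/(2+√2)`. -/
theorem average_le_of_center_on_OA (z : EuclideanSpace ℝ (Fin 2))
    (hz : z ∈ segment ℝ ptO ptA) (ρ : ℝ) (hρ : dist z ptO < ρ) :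
    (∫⁻ y in ball z ρ, fX y ∂μX) / μX (ball z ρ) ≤
      ENNReal.ofReal (2 / (2 + Real.sqrt 2)) := by
  have hρ0 : 0 < ρ := lt_of_le_of_lt dist_nonneg hρ
  have hSA : segment ℝ ptO ptA = AffineMap.lineMap ptO ptA '' Set.Icc (0:ℝ) 1 :=
    segment_eq_image_lineMap ℝ ptO ptA
  have hSC : segment ℝ ptO ptC = AffineMap.lineMap ptO ptC '' Set.Icc (0:ℝ) 1 :=
    segment_eq_image_lineMap ℝ ptO ptC
  have hmeasA : MeasurableSet (segment ℝ ptO ptA) := by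
    rw [hSA]
    exact (isCompact_Icc.image (by fun_prop)).isClosed.measurableSet
  obtain ⟨t, ht, rfl⟩ : ∃ t ∈ Set.Icc (0:ℝ) 1, (!₂[0, t] : EuclideanSpace ℝ (Fin 2)) = z := by
    rw [hSA] at hz
    obtain ⟨t, ht, h⟩ := hz
    exact ⟨t, ht, by rw [← h, lineA]⟩
  obtain ⟨ht0, ht1⟩ := ht
  have htρ : t < ρ := by
    have h : ptO ∈ ball (!₂[0, t] : EuclideanSpace ℝ (Fin 2)) ρ := by
      rw [mem_ball, dist_comm]; exact hρ
    rw [ptO, mem_ball_iff_sq _ _ _ _ hρ0] at h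
    nlinarith
  set B := ball (!₂[0, t] : EuclideanSpace ℝ (Fin 2)) ρ with hB
  set m : ℝ := min 1 ((t + ρ) / 2) with hm
  have hm0 : 0 < m := lt_min one_pos (by linarith)
  have hm1 : m ≤ 1 := min_le_left _ _
  have hm2 : m ≤ (t + ρ) / 2 := min_le_right _ _
  -- the integral
  have hint : ∫⁻ y in B, fX y ∂μX = μH[1] (segment ℝ ptO ptA ∩ B) := by
    rw [fX, lintegral_indicator_one hmeasA, Measure.restrict_apply hmeasA, μX,
      Measure.restrict_apply (hmeasA.inter measurableSet_ball)]
    congr 1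
    rw [Set.inter_eq_left]
    exact fun x hx => Or.inl hx.1
  have hup : μH[1] (segment ℝ ptO ptA ∩ B) ≤ ENNReal.ofReal (2 * m) := by
    have hsub : segment ℝ ptO ptA ∩ B ⊆ AffineMap.lineMap ptO ptA '' Set.Icc (0:ℝ) (2 * m) := by
      rintro x ⟨hx, hxB⟩
      rw [hSA] at hx
      obtain ⟨s, ⟨hs0, hs1⟩, rfl⟩ := hx
      rw [lineA, mem_ball_iff_sq _ _ _ _ hρ0] at hxB
      refine ⟨s, ⟨hs0, ?_⟩, rfl⟩
      have : s / 2 ≤ m := le_min (by linarith) (by nlinarith)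
      linarith
    refine (measure_mono hsub).trans ?_
    rw [hausdorffMeasure_lineMap_image, hausdorffMeasure_real, Real.volume_Icc]
    have : nndist ptO ptA = 1 := by
      ext
      simp [EuclideanSpace.dist_eq, ptO, ptA]
    simp [this]
  have hlowC : ENNReal.ofReal (Real.sqrt 2 * m) =
      μH[1] (AffineMap.lineMap ptO ptC '' Set.Ioo (0:ℝ) m) := by
    rw [hausdorffMeasure_lineMap_image, hausdorffMeasure_real, Real.volume_Ioo, sub_zero]
    have : nndist ptO ptC = Real.toNNReal (Real.sqrt 2) := by
      ext
      simp [EuclideanSpace.dist_eq, ptO, ptC]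
      norm_num
    rw [this, ENNReal.ofReal_mul (Real.sqrt_nonneg 2), ENNReal.smul_def, smul_eq_mul]
    rfl
  have hlow : μH[1] (segment ℝ ptO ptA ∩ B) + ENNReal.ofReal (Real.sqrt 2 * m) ≤ μX B := by
    rw [hlowC, μX, Measure.restrict_apply measurableSet_ball,
      ← measure_union' _ (hmeasA.inter measurableSet_ball)]
    · apply measure_mono
      rintro x (⟨hx, hxB⟩ | ⟨s, ⟨hs0, hs1⟩, rfl⟩)
      · exact ⟨hxB, Or.inl hx⟩
      · refine ⟨?_, Or.inr ?_⟩
        · rw [lineC, mem_ball_iff_sq _ _ _ _ hρ0]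
          nlinarith
        · rw [hSC]
          exact ⟨s, ⟨hs0.le, by linarith⟩, rfl⟩
    · rw [Set.disjoint_left]
      rintro x ⟨hx, -⟩ ⟨s, ⟨hs0, hs1⟩, rfl⟩
      rw [hSA] at hx
      obtain ⟨u, -, hu⟩ := hx
      rw [lineA, lineC] at hu
      have := congrArg (fun v : EuclideanSpace ℝ (Fin 2) => v 0) hu
      simp at this
      linarith
  rw [hint]
  apply ENNReal.div_le_of_le_mul
  refine le_trans ?_ (mul_le_mul_right hlow _)
  have hfin : μH[1] (segment ℝ ptO ptA ∩ B) ≠ ⊤ := ne_top_of_le_ne_top ENNReal.ofReal_ne_top hup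
  obtain ⟨a, ha0, ha⟩ : ∃ a : ℝ, 0 ≤ a ∧ μH[1] (segment ℝ ptO ptA ∩ B) = ENNReal.ofReal a :=
    ⟨_, ENNReal.toReal_nonneg, (ENNReal.ofReal_toReal hfin).symm⟩
  rw [ha] at hup ⊢
  have ham : a ≤ 2 * m := (ENNReal.ofReal_le_ofReal_iff (by linarith)).1 hup
  have hs := Real.sqrt_nonneg 2
  rw [← ENNReal.ofReal_add ha0 (by positivity), ← ENNReal.ofReal_mul (by positivity)]
  apply ENNReal.ofReal_le_ofReal
  rw [div_mul_eq_mul_div, le_div_iff₀ (by positivity)]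
  nlinarith

end
end
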